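/- arXiv:2305.15173 — 13 statements merged into one kernel-verified Lean document; each statement's English description precedes it below -/
import Mathlib

section
/- Let Π = (MIN, MAX) be an objective decomposition, let s be a scalarizing function for Π, and let q, y ∈ ℝ^p_>. Then there exists a real number λ > 0 such that s(q') = s(y), where q' ∈ ℝ^p_> is defined by q'_i = λ·q_i for all i ∈ MIN and q'_i = (1/λ)·q_i for all i ∈ MAX. -/
open scoped Classical

namespace MOApprox

/-- Membership in the positive orthant `ℝ^p_>`. -/
def Pos (p : ℕ) (y : Fin p → ℝ) : Prop := ∀ i, 0 < y i

/-- Strict component-wise order `<_Π`, where `Π = (MIN, MINᶜ)`. -/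
def ltPi (p : ℕ) (MIN : Set (Fin p)) (y y' : Fin p → ℝ) : Prop :=
  (∀ i ∈ MIN, y i < y' i) ∧ (∀ i ∉ MIN, y' i < y i)

/-- Weak component-wise order `≦_Π`. -/
def leqPi (p : ℕ) (MIN : Set (Fin p)) (y y' : Fin p → ℝ) : Prop :=
  (∀ i ∈ MIN, y i ≤ y' i) ∧ (∀ i ∉ MIN, y' i ≤ y i)

/-- Component-wise order `≤_Π`. -/
def lePi (p : ℕ) (MIN : Set (Fin p)) (y y' : Fin p → ℝ) : Prop :=
  leqPi p MIN y y' ∧ y ≠ y'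

/-- A scalarizing function for the decomposition `(MIN, MINᶜ)`:
continuous on the positive orthant and strictly `Π`-monotone. -/
def Scalarizing (p : ℕ) (MIN : Set (Fin p)) (s : (Fin p → ℝ) → ℝ) : Prop :=
  ContinuousOn s {y | Pos p y} ∧
    ∀ y y', Pos p y → Pos p y' → ltPi p MIN y y' → s y < s y'

/-- Strong `Π`-monotonicity. -/
def StronglyMonotone (p : ℕ) (MIN : Set (Fin p)) (s : (Fin p → ℝ) → ℝ) : Prop :=
  ∀ y y', Pos p y → Pos p y' → lePi p MIN y y' → s y < s y'

/-- Level set of `s` at `y'` (within the positive orthant). -/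
def LevelSet (p : ℕ) (s : (Fin p → ℝ) → ℝ) (y' : Fin p → ℝ) : Set (Fin p → ℝ) :=
  {y | Pos p y ∧ s y = s y'}

/-- `x` is optimal for the scalarizing function `s` in the instance `(X, f)`. -/
def OptimalFor {X : Type*} (p : ℕ) (s : (Fin p → ℝ) → ℝ) (f : X → Fin p → ℝ) (x : X) : Prop :=
  ∀ x', s (f x) ≤ s (f x')

/-- `P` is an optimal solution set for the scalarization `S`. -/
def OptSolSet {X : Type*} (p : ℕ) (S : Set ((Fin p → ℝ) → ℝ)) (f : X → Fin p → ℝ)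
    (P : Set X) : Prop :=
  ∀ s ∈ S, ∃ x ∈ P, OptimalFor p s f x

/-- `x` α-approximates `x'` with respect to the decomposition `(MIN, MINᶜ)`. -/
def Approximates {X : Type*} (p : ℕ) (MIN : Set (Fin p)) (α : ℝ) (f : X → Fin p → ℝ)
    (x x' : X) : Prop :=
  (∀ i ∈ MIN, f x i ≤ α * f x' i) ∧ (∀ i ∉ MIN, (1 / α) * f x' i ≤ f x i)

/-- `P` is an α-approximation set. -/
def ApproxSet {X : Type*} (p : ℕ) (MIN : Set (Fin p)) (α : ℝ) (f : X → Fin p → ℝ)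
    (P : Set X) : Prop :=
  ∀ x' : X, ∃ x ∈ P, Approximates p MIN α f x x'

/-- The flip map `σ^Γ`. -/
noncomputable def flipMap (p : ℕ) (Γ : Set (Fin p)) (y : Fin p → ℝ) : Fin p → ℝ :=
  fun i => if i ∈ Γ then 1 / y i else y i

/-- The `Γ`-transformed decomposition `MIN^Γ = (MIN \ Γ) ∪ (Γ ∩ MAX)`. -/
def transDec (p : ℕ) (MIN Γ : Set (Fin p)) : Set (Fin p) :=
  (MIN \ Γ) ∪ (Γ ∩ MINᶜ)

/-- The component-wise worst-case ratio
`max(max_{i ∈ MIN} y_i/y'_i, max_{i ∈ MAX} y'_i/y_i)`, where a maximum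
over an empty index set is `0` (the convention of `Real.sSup` on `∅`). -/
noncomputable def ratio (p : ℕ) (MIN : Set (Fin p)) (y' y : Fin p → ℝ) : ℝ :=
  max (⨆ i : MIN, y i / y' i) (⨆ i : ↥(MINᶜ), y' i / y i)

/-- `sup R(y', s)`, taken in the extended reals. -/
noncomputable def supRatio (p : ℕ) (MIN : Set (Fin p)) (s : (Fin p → ℝ) → ℝ)
    (y' : Fin p → ℝ) : EReal :=
  sSup ((fun y => ((ratio p MIN y' y : ℝ) : EReal)) '' LevelSet p s y')

/-- The function value of a `p`-dimensional norm, as a predicate. -/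
def IsNorm (p : ℕ) (s : (Fin p → ℝ) → ℝ) : Prop :=
  (∀ y, 0 ≤ s y) ∧ (∀ y, s y = 0 ↔ y = 0) ∧
    (∀ (c : ℝ) (y), s (c • y) = |c| * s y) ∧
    (∀ y z, s (y + z) ≤ s y + s z)

/-- Strict monotonicity on the positive orthant. -/
def StrictMonoOnPos (p : ℕ) (s : (Fin p → ℝ) → ℝ) : Prop :=
  ∀ y y' : Fin p → ℝ, Pos p y → Pos p y' → (∀ i, y i < y' i) → s y < s y'

end MOApprox

open MOApprox in
/-- For a scalarizing function `s` for `Π = (MIN, MINᶜ)` and positive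
points `q, y`, there is `λ > 0` such that `s q' = s y`, where `q'_i = λ·q_i` for
`i ∈ MIN` and `q'_i = (1/λ)·q_i` for `i ∈ MAX`. -/
theorem statement0 (p : ℕ) (hp : 1 ≤ p) (MIN : Set (Fin p))
    (s : (Fin p → ℝ) → ℝ) (hs : Scalarizing p MIN s)
    (q y : Fin p → ℝ) (hq : Pos p q) (hy : Pos p y) :
    ∃ lam : ℝ, 0 < lam ∧
      Pos p (fun i => if i ∈ MIN then lam * q i else (1 / lam) * q i) ∧
      s (fun i => if i ∈ MIN then lam * q i else (1 / lam) * q i) = s y := by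
  obtain ⟨hc, hm⟩ := hs
  have hpos : ∀ lam : ℝ, 0 < lam →
      Pos p (fun i => if i ∈ MIN then lam * q i else (1 / lam) * q i) := by
    intro lam hl i
    have := hq i
    dsimp only
    split_ifs <;> positivity
  have hcont : ContinuousOn
      (fun lam : ℝ => s (fun i => if i ∈ MIN then lam * q i else (1 / lam) * q i))
      (Set.Ioi 0) := by
    refine ContinuousOn.comp (t := {y | Pos p y}) hc ?_ (fun lam hl => hpos lam hl)
    refine continuousOn_pi.2 fun i => ?_
    by_cases h : i ∈ MIN
    · simp only [h, if_true]
      fun_prop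
    · simp only [h, if_false]
      refine ContinuousOn.mul (ContinuousOn.div continuousOn_const continuousOn_id ?_)
        continuousOn_const
      intro x hx
      exact ne_of_gt hx
  obtain ⟨B, hB, h1⟩ : ∃ B : ℝ, 0 < B ∧ ∀ i, y i < B * q i ∧ q i < B * y i := by
    have hn : ∀ i, 0 < y i / q i + q i / y i := fun i => by
      have := hq i
      have := hy i
      positivity
    have hsum : 0 ≤ ∑ i, (y i / q i + q i / y i) := Finset.sum_nonneg fun i _ => (hn i).le
    refine ⟨1 + ∑ i, (y i / q i + q i / y i), by linarith, fun i => ?_⟩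
    have hle := Finset.single_le_sum (f := fun i => y i / q i + q i / y i)
      (fun i _ => (hn i).le) (Finset.mem_univ i)
    have a := div_pos (hy i) (hq i)
    have b := div_pos (hq i) (hy i)
    exact ⟨(div_lt_iff₀ (hq i)).1 (by linarith), (div_lt_iff₀ (hy i)).1 (by linarith)⟩
  have hB' : 0 < B⁻¹ := inv_pos.2 hB
  have h2 : ∀ i, B⁻¹ * q i < y i := fun i => by
    rw [inv_mul_lt_iff₀ hB]
    exact (h1 i).2
  have hlo := hm _ y (hpos B⁻¹ hB') hy ⟨fun i hi => by simpa [hi] using h2 i,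
    fun i hi => by simpa [hi] using (h1 i).1⟩
  have hhi := hm y _ hy (hpos B hB) ⟨fun i hi => by simpa [hi] using (h1 i).1,
    fun i hi => by simpa [hi] using h2 i⟩
  obtain ⟨lam, hl, he⟩ := isPreconnected_Ioi.intermediate_value
    (Set.mem_Ioi.2 hB') (Set.mem_Ioi.2 hB) hcont ⟨hlo.le, hhi.le⟩
  exact ⟨lam, hl, hpos lam hl, he⟩
end

section
/- Let Π = (MIN, MAX) be an objective decomposition, let I = (X, f) be an instance of a p-objective optimization problem of type Π (so X is nonempty and f(X) ⊆ ℝ^p_> is compact), and let s be a scalarizing function for Π. Then there exists a solution x ∈ X that is optimal for s and is also efficient. -/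
open scoped Classical

open MOApprox in
/-- There exists a solution that is optimal for the scalarizing
function `s` and also efficient. -/
theorem statement3 (p : ℕ) (hp : 1 ≤ p) (MIN : Set (Fin p))
    {X : Type*} (hX : Nonempty X) (f : X → Fin p → ℝ)
    (hpos : ∀ x, Pos p (f x)) (hcomp : IsCompact (Set.range f))
    (s : (Fin p → ℝ) → ℝ) (hs : Scalarizing p MIN s) :
    ∃ x : X, OptimalFor p s f x ∧ ¬ ∃ x' : X, lePi p MIN (f x') (f x) := by
  obtain ⟨hc, hm⟩ := hs
  have hsub : Set.range f ⊆ {y | Pos p y} := by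
    rintro _ ⟨x, rfl⟩; exact hpos x
  have hcR : ContinuousOn s (Set.range f) := hc.mono hsub
  obtain ⟨_, ⟨x0, rfl⟩, h0⟩ := hcomp.exists_isMinOn (Set.range_nonempty f) hcR
  have h0' : ∀ x, s (f x0) ≤ s (f x) := fun x => h0 (Set.mem_range_self x)
  -- monotone in the weak sense
  have weak : ∀ y y', Pos p y → Pos p y' → leqPi p MIN y y' → s y ≤ s y' := by
    intro y y' hy hy' hle
    let g : ℝ → Fin p → ℝ := fun t i => if i ∈ MIN then (1 - t) * y i else (1 + t) * y i
    have hg : Continuous g := by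
      refine continuous_pi fun i => ?_
      by_cases hi : i ∈ MIN
      · simp only [g, hi, if_true]; fun_prop
      · simp only [g, hi, if_false]; fun_prop
    have hg0 : g 0 = y := by
      funext i; simp [g]
    have hopen : IsOpen {y : Fin p → ℝ | Pos p y} := by
      simp only [Pos, Set.setOf_forall]
      exact isOpen_iInter_of_finite fun i => isOpen_lt continuous_const (continuous_apply i)
    have hca : ContinuousAt s (g 0) := by
      rw [hg0]; exact hc.continuousAt (hopen.mem_nhds hy)
    have hT : Filter.Tendsto (fun t => s (g t)) (nhdsWithin 0 (Set.Ioi 0)) (nhds (s y)) := by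
      have h := (ContinuousAt.comp hca hg.continuousAt).tendsto
      simp only [Function.comp_apply, hg0] at h
      exact h.mono_left nhdsWithin_le_nhds
    refine le_of_tendsto hT ?_
    filter_upwards [Ioo_mem_nhdsGT (show (0:ℝ) < 1 by norm_num)] with t ht
    obtain ⟨t0, t1⟩ := ht
    refine (hm _ _ ?_ hy' ⟨?_, ?_⟩).le
    · intro i
      have := hy i
      by_cases hi : i ∈ MIN
      · simp only [g, hi, if_true]; exact mul_pos (by linarith) this
      · simp only [g, hi, if_false]; exact mul_pos (by linarith) this
    · intro i hi
      have := hle.1 i hi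
      have := mul_pos t0 (hy i)
      simp only [g, hi, if_true]; nlinarith
    · intro i hi
      have := hle.2 i hi
      have := mul_pos t0 (hy i)
      simp only [g, hi, if_false]; nlinarith
  -- the compact set of optimal images
  have hK : IsCompact (Set.range f ∩ s ⁻¹' {s (f x0)}) :=
    hcomp.of_isClosed_subset
      (hcR.preimage_isClosed_of_isClosed hcomp.isClosed isClosed_singleton)
      Set.inter_subset_left
  let w : (Fin p → ℝ) → ℝ := fun y => ∑ i, (if i ∈ MIN then y i else - y i)
  have hw : Continuous w := by
    refine continuous_finsetSum _ fun i _ => ?_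
    by_cases hi : i ∈ MIN
    · simp only [hi, if_true]; fun_prop
    · simp only [hi, if_false]; fun_prop
  obtain ⟨_, ⟨⟨x, rfl⟩, hx⟩, hxm⟩ := hK.exists_isMinOn ⟨f x0, ⟨x0, rfl⟩, rfl⟩ hw.continuousOn
  have hx' : s (f x) = s (f x0) := hx
  refine ⟨x, fun x' => hx'.trans_le (h0' x'), ?_⟩
  rintro ⟨z, hz, hne⟩
  have hsz : s (f z) = s (f x0) :=
    le_antisymm ((weak _ _ (hpos z) (hpos x) hz).trans_eq hx') (h0' z)
  have h1 : w (f x) ≤ w (f z) := hxm ⟨⟨z, rfl⟩, hsz⟩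
  have h2 : w (f z) < w (f x) := by
    obtain ⟨j, hj⟩ := Function.ne_iff.mp hne
    refine Finset.sum_lt_sum (fun i _ => ?_) ⟨j, Finset.mem_univ _, ?_⟩
    · by_cases hi : i ∈ MIN
      · simpa only [hi, if_true] using hz.1 i hi
      · simpa only [hi, if_false] using neg_le_neg (hz.2 i hi)
    · by_cases hi : j ∈ MIN
      · simpa only [hi, if_true] using lt_of_le_of_ne (hz.1 j hi) hj
      · simpa only [hi, if_false] using neg_lt_neg (lt_of_le_of_ne (hz.2 j hi) hj.symm)
  exact absurd h1 (not_le.mpr h2)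
end

section
/- Let Π = (MIN, MAX) be an objective decomposition, let S be a scalarization for Π, let I = (X, f) be an instance of a p-objective optimization problem of type Π, let α ≥ 1, and let Γ ⊆ {1,…,p}. Then every optimal solution set for S in I is an α-approximation set for I with respect to Π if and only if every optimal solution set for the Γ-transformed scalarization S^Γ in the Γ-transformed instance I^Γ is an α-approximation set for I^Γ with respect to the Γ-transformed decomposition Π^Γ. -/
open scoped Classical

theorem MOApprox.flip_approx_iff {X : Type*} (p : ℕ) (MIN Γ : Set (Fin p)) (α : ℝ) (hα : 1 ≤ α)
    (f : X → Fin p → ℝ) (hpos : ∀ x, MOApprox.Pos p (f x)) (x x' : X) :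
    MOApprox.Approximates p (MOApprox.transDec p MIN Γ) α (fun x => MOApprox.flipMap p Γ (f x)) x x' ↔
      MOApprox.Approximates p MIN α f x x' := by
  have h0 : 0 < α := by linarith
  have key1 : ∀ a b : ℝ, 0 < a → 0 < b → (1 / a ≤ α * (1 / b) ↔ (1 / α) * b ≤ a) := by
    intro a b ha hb
    rw [mul_one_div, div_le_div_iff₀ ha hb, one_div_mul_eq_div, div_le_iff₀ h0, one_mul, mul_comm]
  have key2 : ∀ a b : ℝ, 0 < a → 0 < b → ((1 / α) * (1 / b) ≤ 1 / a ↔ a ≤ α * b) := by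
    intro a b ha hb
    rw [one_div_mul_one_div, one_div_le_one_div (by positivity) ha]
  unfold MOApprox.Approximates
  rw [← forall_and, ← forall_and]
  refine forall_congr' fun i => ?_
  have k1 := key1 _ _ (hpos x i) (hpos x' i)
  have k2 := key2 _ _ (hpos x i) (hpos x' i)
  by_cases hM : i ∈ MIN <;> by_cases hG : i ∈ Γ <;>
    simp only [MOApprox.transDec, MOApprox.flipMap, Set.mem_union, Set.mem_sdiff, Set.mem_inter_iff,
      Set.mem_compl_iff, hM, hG, if_true, if_false, k1, k2] <;> simp

theorem MOApprox.flipMap_flipMap (p : ℕ) (Γ : Set (Fin p)) (y : Fin p → ℝ) :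
    MOApprox.flipMap p Γ (MOApprox.flipMap p Γ y) = y := by
  funext i
  by_cases hG : i ∈ Γ <;> simp [MOApprox.flipMap, hG]

open MOApprox in
/-- Every optimal solution set for `S` in `I` is an
`α`-approximation set w.r.t. `Π` iff every optimal solution set for the
`Γ`-transformed scalarization `S^Γ` in the `Γ`-transformed instance `I^Γ` is an
`α`-approximation set w.r.t. `Π^Γ`. -/
theorem statement6 (p : ℕ) (hp : 1 ≤ p) (MIN : Set (Fin p))
    (S : Set ((Fin p → ℝ) → ℝ)) (hS : ∀ s ∈ S, Scalarizing p MIN s)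
    {X : Type*} (hX : Nonempty X) (f : X → Fin p → ℝ)
    (hpos : ∀ x, Pos p (f x)) (hcomp : IsCompact (Set.range f))
    (α : ℝ) (hα : 1 ≤ α) (Γ : Set (Fin p)) :
    (∀ P : Set X, OptSolSet p S f P → ApproxSet p MIN α f P) ↔
    (∀ P : Set X,
        OptSolSet p ((fun s => fun y => s (flipMap p Γ y)) '' S)
          (fun x => flipMap p Γ (f x)) P →
        ApproxSet p (transDec p MIN Γ) α (fun x => flipMap p Γ (f x)) P) := by
  refine forall_congr' fun P => ?_
  have h1 : OptSolSet p ((fun s => fun y => s (flipMap p Γ y)) '' S)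
      (fun x => flipMap p Γ (f x)) P ↔ OptSolSet p S f P := by
    simp only [OptSolSet, OptimalFor, Set.forall_mem_image, flipMap_flipMap]
  have h2 : ApproxSet p (transDec p MIN Γ) α (fun x => flipMap p Γ (f x)) P ↔
      ApproxSet p MIN α f P := by
    simp only [ApproxSet, flip_approx_iff p MIN Γ α hα f hpos]
  rw [h1, h2]
end

section
/- (Transformation Theorem) Let α ≥ 1 and let Π = (MIN, MAX) be an objective decomposition. Suppose S is a scalarization for Π such that in every instance of every p-objective optimization problem of type Π, every optimal solution set for S is an α-approximation set. Then for every objective decomposition Π' there exists a scalarization S' for Π' such that in every instance of every p-objective optimization problem of type Π', every optimal solution set for S' is an α-approximation set. -/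
open scoped Classical

open MOApprox in
/-- Transformation Theorem: If `S` is a scalarization for `Π`
such that in every instance of every `p`-objective optimization problem of
type `Π`, every optimal solution set for `S` is an `α`-approximation set, then
for every other objective decomposition `Π'` there is a scalarization `S'` for
`Π'` with the same property. -/
theorem statement7 (p : ℕ) (hp : 1 ≤ p) (α : ℝ) (hα : 1 ≤ α) (MIN : Set (Fin p))
    (S : Set ((Fin p → ℝ) → ℝ)) (hS : ∀ s ∈ S, Scalarizing p MIN s)
    (h : ∀ (X : Type) (f : X → Fin p → ℝ), Nonempty X → (∀ x, Pos p (f x)) →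
      IsCompact (Set.range f) →
      ∀ P : Set X, OptSolSet p S f P → ApproxSet p MIN α f P)
    (MIN' : Set (Fin p)) :
    ∃ S' : Set ((Fin p → ℝ) → ℝ), (∀ s ∈ S', Scalarizing p MIN' s) ∧
      ∀ (X : Type) (f : X → Fin p → ℝ), Nonempty X → (∀ x, Pos p (f x)) →
        IsCompact (Set.range f) →
        ∀ P : Set X, OptSolSet p S' f P → ApproxSet p MIN' α f P := by
  -- Γ is the set of objectives whose type changes
  let Γ : Set (Fin p) := {i | ¬ (i ∈ MIN ↔ i ∈ MIN')}
  have hα0 : 0 < α := by linarith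
  have hpos : ∀ y, Pos p y → Pos p (flipMap p Γ y) := by
    intro y hy i
    unfold flipMap
    split_ifs
    · exact one_div_pos.mpr (hy i)
    · exact hy i
  have hcont : ContinuousOn (flipMap p Γ) {y | Pos p y} := by
    rw [continuousOn_pi]
    intro i
    unfold flipMap
    by_cases hi : i ∈ Γ
    · simp only [hi, if_true]
      exact continuousOn_const.div (continuous_apply i).continuousOn
        (fun y hy => (hy i).ne')
    · simp only [hi, if_false]
      exact (continuous_apply i).continuousOn
  refine ⟨(fun s => fun y => s (flipMap p Γ y)) '' S, ?_, ?_⟩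
  · rintro _ ⟨s, hs, rfl⟩
    refine ⟨(hS s hs).1.comp hcont (fun y hy => hpos y hy), ?_⟩
    intro y y' hy hy' hlt
    refine (hS s hs).2 _ _ (hpos y hy) (hpos y' hy') ⟨?_, ?_⟩
    · intro i hi
      by_cases hi' : i ∈ MIN'
      · have hg : i ∉ Γ := by simp [Γ, hi, hi']
        simpa [flipMap, hg] using hlt.1 i hi'
      · have hg : i ∈ Γ := by simp [Γ, hi, hi']
        simp only [flipMap, hg, if_true]
        exact one_div_lt_one_div_of_lt (hy' i) (hlt.2 i hi')
    · intro i hi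
      by_cases hi' : i ∈ MIN'
      · have hg : i ∈ Γ := by simp [Γ, hi, hi']
        simp only [flipMap, hg, if_true]
        exact one_div_lt_one_div_of_lt (hy i) (hlt.1 i hi')
      · have hg : i ∉ Γ := by simp [Γ, hi, hi']
        simpa [flipMap, hg] using hlt.2 i hi'
  · intro X f hX hf hc P hP x'
    have hc' : IsCompact (Set.range (fun x => flipMap p Γ (f x))) := by
      have : Set.range (fun x => flipMap p Γ (f x)) = flipMap p Γ '' Set.range f :=
        Set.range_comp (flipMap p Γ) f
      rw [this]
      refine hc.image_of_continuousOn (hcont.mono ?_)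
      rintro _ ⟨x, rfl⟩
      exact hf x
    obtain ⟨x, hxP, h1, h2⟩ := h X (fun x => flipMap p Γ (f x)) hX
      (fun x => hpos _ (hf x)) hc' P (fun s hs => hP _ ⟨s, hs, rfl⟩) x'
    have a := hf x
    have b := hf x'
    refine ⟨x, hxP, ?_, ?_⟩
    · intro i hi'
      by_cases hi : i ∈ MIN
      · have hg : i ∉ Γ := by simp [Γ, hi, hi']
        simpa [flipMap, hg] using h1 i hi
      · have hg : i ∈ Γ := by simp [Γ, hi, hi']
        have := h2 i hi
        simp only [flipMap, hg, if_true] at this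
        rw [one_div_mul_one_div] at this
        exact (one_div_le_one_div (mul_pos hα0 (b i)) (a i)).mp this
    · intro i hi'
      by_cases hi : i ∈ MIN
      · have hg : i ∈ Γ := by simp [Γ, hi, hi']
        have := h1 i hi
        simp only [flipMap, hg, if_true] at this
        rw [mul_one_div, div_le_div_iff₀ (a i) (b i)] at this
        rw [one_div_mul_eq_div, div_le_iff₀ hα0]
        linarith
      · have hg : i ∉ Γ := by simp [Γ, hi, hi']
        simpa [flipMap, hg] using h2 i hi
end

section
/- Let Π = (MIN, MAX) be an objective decomposition, let I = (X, f) be an instance of a p-objective optimization problem of type Π, let x' ∈ X with y' := f(x'), and let s be a scalarizing function for Π. Suppose the ratio set R := {max(max_{i ∈ MIN} y_i/y'_i, max_{i ∈ MAX} y'_i/y_i) : y ∈ L(y', s)} is bounded above, and let α := sup R (a real number, since y' ∈ L(y', s) makes R nonempty). Then every solution x ∈ X that is optimal for s α-approximates x'. -/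
open scoped Classical

open MOApprox in
/-- If the ratio set
`R = {max(max_{i∈MIN} y_i/y'_i, max_{i∈MAX} y'_i/y_i) : y ∈ L(y', s)}` is
bounded above and `α := sup R`, then every solution optimal for `s`
`α`-approximates `x'`. -/
theorem statement9 (p : ℕ) (hp : 1 ≤ p) (MIN : Set (Fin p))
    {X : Type*} (hX : Nonempty X) (f : X → Fin p → ℝ)
    (hpos : ∀ x, Pos p (f x)) (hcomp : IsCompact (Set.range f))
    (x' : X) (s : (Fin p → ℝ) → ℝ) (hs : Scalarizing p MIN s)
    (hbdd : BddAbove (ratio p MIN (f x') '' LevelSet p s (f x'))) :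
    ∀ x : X, OptimalFor p s f x →
      Approximates p MIN (sSup (ratio p MIN (f x') '' LevelSet p s (f x'))) f x x' := by
  intro x hopt
  obtain ⟨hcont, hmono⟩ := hs
  have hy : ∀ i, 0 < f x i := hpos x
  have hy' : ∀ i, 0 < f x' i := hpos x'
  -- the path leaving `f x` in the worsening direction
  let z : ℝ → Fin p → ℝ := fun t i => if i ∈ MIN then f x i * t else f x i / t
  have hz1 : z 1 = f x := by
    funext i
    simp [z]
  have hzpos : ∀ t : ℝ, 1 ≤ t → Pos p (z t) := by
    intro t ht i
    have h0 : 0 < t := by linarith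
    have := hy i
    by_cases h : i ∈ MIN
    · simp only [z, if_pos h]; positivity
    · simp only [z, if_neg h]; positivity
  let T : ℝ := 1 + ∑ i, (f x' i / f x i + f x i / f x' i)
  have hterm : ∀ i, 0 < f x' i / f x i ∧ 0 < f x i / f x' i := fun i =>
    ⟨div_pos (hy' i) (hy i), div_pos (hy i) (hy' i)⟩
  have hTi : ∀ i, 1 + (f x' i / f x i + f x i / f x' i) ≤ T := by
    intro i
    have := Finset.single_le_sum (f := fun i => f x' i / f x i + f x i / f x' i)
      (fun j _ => (add_pos (hterm j).1 (hterm j).2).le) (Finset.mem_univ i)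
    simp only [T]
    linarith
  have hT1 : 1 ≤ T := by
    have := Finset.sum_nonneg (s := Finset.univ)
      (f := fun i => f x' i / f x i + f x i / f x' i)
      (fun j _ => (add_pos (hterm j).1 (hterm j).2).le)
    simp only [T]
    linarith
  have hT0 : 0 < T := by linarith
  have hlt : s (f x') < s (z T) := by
    apply hmono _ _ (hpos x') (hzpos T hT1)
    constructor
    · intro i hi
      simp only [z, if_pos hi]
      have h1 : f x' i / f x i < T := by linarith [hTi i, (hterm i).2]
      rw [div_lt_iff₀ (hy i)] at h1
      linarith
    · intro i hi
      simp only [z, if_neg hi]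
      have h1 : f x i / f x' i < T := by linarith [hTi i, (hterm i).1]
      rw [div_lt_iff₀ (hy' i)] at h1
      rw [div_lt_iff₀ hT0]
      linarith
  have hzc : ContinuousOn (fun t => s (z t)) (Set.Icc 1 T) := by
    refine hcont.comp (t := {y | Pos p y}) (f := z) ?_ (fun t ht => hzpos t ht.1)
    rw [continuousOn_pi]
    intro i
    by_cases h : i ∈ MIN
    · simp only [z, if_pos h]; fun_prop
    · simp only [z, if_neg h]
      refine continuousOn_const.div continuousOn_id ?_
      intro t ht
      have h1 : (1:ℝ) ≤ t := ht.1
      exact ne_of_gt (by linarith)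
  have hmem : s (f x') ∈ (fun t => s (z t)) '' Set.Icc 1 T := by
    apply intermediate_value_Icc hT1 hzc
    refine ⟨?_, hlt.le⟩
    simp only [hz1]
    exact hopt x'
  obtain ⟨t, ⟨ht1, -⟩, ht⟩ := hmem
  have ht0 : 0 < t := by linarith
  have hsup : ratio p MIN (f x') (z t) ≤ sSup (ratio p MIN (f x') '' LevelSet p s (f x')) :=
    le_csSup hbdd ⟨z t, ⟨hzpos t ht1, ht⟩, rfl⟩
  generalize sSup (ratio p MIN (f x') '' LevelSet p s (f x')) = α at hsup
  constructor
  · intro i hi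
    have h1 : z t i / f x' i ≤ ⨆ i : MIN, z t i / f x' i :=
      le_ciSup (f := fun i : MIN => z t i / f x' i) (Set.finite_range _).bddAbove ⟨i, hi⟩
    have h2 : z t i / f x' i ≤ α := h1.trans ((le_max_left _ _).trans hsup)
    rw [div_le_iff₀ (hy' i)] at h2
    simp only [z, if_pos hi] at h2
    nlinarith [hy i]
  · intro i hi
    have h1 : f x' i / z t i ≤ ⨆ i : ↥(MINᶜ), f x' i / z t i :=
      le_ciSup (f := fun i : ↥(MINᶜ) => f x' i / z t i) (Set.finite_range _).bddAbove ⟨i, hi⟩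
    have h2 : f x' i / z t i ≤ α := h1.trans ((le_max_right _ _).trans hsup)
    have hα : 0 < α := lt_of_lt_of_le (div_pos (hy' i) (hzpos t ht1 i)) h2
    rw [div_le_iff₀ (hzpos t ht1 i)] at h2
    have h3 : z t i ≤ f x i := by
      simp only [z, if_neg hi]
      exact div_le_self (hy i).le ht1
    rw [one_div, inv_mul_le_iff₀ hα]
    exact h2.trans (mul_le_mul_of_nonneg_left h3 hα.le)
end

section
/- Let Π = (MIN, MAX) be an objective decomposition, let I = (X, f) be an instance of a p-objective optimization problem of type Π, let x' ∈ X with y' := f(x'), and let S be a scalarization for Π. For s ∈ S let R(s) := {max(max_{i ∈ MIN} y_i/y'_i, max_{i ∈ MAX} y'_i/y_i) : y ∈ L(y', s)} and suppose that for some s̄ ∈ S the set R(s̄) is bounded above. Let α := inf_{s ∈ S} sup R(s), where suprema are taken in the extended reals (so α is a finite real). Then for every ε > 0 there exists s ∈ S such that every solution x ∈ X optimal for s (α + ε)-approximates x'. Moreover, if the infimum is attained at some s ∈ S, then every solution optimal for that s α-approximates x'. -/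
open scoped Classical

namespace MOApprox

lemma exists_level (p : ℕ) (MIN : Set (Fin p)) (s : (Fin p → ℝ) → ℝ)
    (hs : Scalarizing p MIN s) (y y' : Fin p → ℝ) (hy : Pos p y) (hy' : Pos p y')
    (h : s y ≤ s y') :
    ∃ z ∈ LevelSet p s y', (∀ i ∈ MIN, y i ≤ z i) ∧ (∀ i ∉ MIN, z i ≤ y i) := by
  let g : ℝ → Fin p → ℝ := fun t i => if i ∈ MIN then y i * t else y i / t
  let T : ℝ := 1 + ∑ j, (y' j / y j + y j / y' j)
  have hterm : ∀ j, 0 < y' j / y j ∧ 0 < y j / y' j := fun j =>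
    ⟨div_pos (hy' j) (hy j), div_pos (hy j) (hy' j)⟩
  have hle : ∀ j, y' j / y j + y j / y' j ≤ ∑ j, (y' j / y j + y j / y' j) := fun j =>
    Finset.single_le_sum (f := fun j => y' j / y j + y j / y' j)
      (fun k _ => (add_pos (hterm k).1 (hterm k).2).le) (Finset.mem_univ j)
  have hT1 : 1 ≤ T := by
    have : 0 ≤ ∑ j, (y' j / y j + y j / y' j) :=
      Finset.sum_nonneg (fun k _ => (add_pos (hterm k).1 (hterm k).2).le)
    simp only [T]; linarith
  have hgpos : ∀ t, 1 ≤ t → Pos p (g t) := by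
    intro t ht i
    have : 0 < t := by linarith
    have := hy i
    simp only [g]
    split_ifs <;> positivity
  have hg1 : g 1 = y := by
    funext i; simp [g]
  have hgT : s y' < s (g T) := by
    apply hs.2 _ _ hy' (hgpos T hT1)
    have hT0 : 0 < T := by linarith
    constructor
    · intro i hi
      simp only [g, if_pos hi]
      have h1 : y' i / y i < T := by
        have := hle i; have := hterm i; simp only [T]; linarith
      rw [div_lt_iff₀ (hy i)] at h1
      linarith
    · intro i hi
      simp only [g, if_neg hi]
      have h1 : y i / y' i < T := by
        have := hle i; have := hterm i; simp only [T]; linarith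
      rw [div_lt_iff₀ (hy' i)] at h1
      rw [div_lt_iff₀ hT0]
      linarith
  have hgc : ContinuousOn g (Set.Icc 1 T) := by
    apply continuousOn_pi.2
    intro i
    by_cases hi : i ∈ MIN
    · simp only [g, if_pos hi]; fun_prop
    · simp only [g, if_neg hi]
      apply ContinuousOn.div continuousOn_const continuousOn_id
      intro t ht
      have := ht.1
      simp only [id]; linarith
  have hc : ContinuousOn (fun t => s (g t)) (Set.Icc 1 T) :=
    hs.1.comp hgc (fun t ht => hgpos t ht.1)
  have hivt := intermediate_value_Icc hT1 hc
  obtain ⟨t, ht, hst⟩ := hivt (show s y' ∈ Set.Icc (s (g 1)) (s (g T)) from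
    ⟨by rw [hg1]; exact h, hgT.le⟩)
  refine ⟨g t, ⟨hgpos t ht.1, hst⟩, ?_, ?_⟩
  · intro i hi
    simp only [g, if_pos hi]
    exact le_mul_of_one_le_right (hy i).le ht.1
  · intro i hi
    simp only [g, if_neg hi]
    exact div_le_self (hy i).le ht.1

lemma ratio_ge (p : ℕ) (MIN : Set (Fin p)) (y' y : Fin p → ℝ) :
    (∀ i ∈ MIN, y i / y' i ≤ ratio p MIN y' y) ∧
    (∀ i ∉ MIN, y' i / y i ≤ ratio p MIN y' y) := by
  constructor
  · intro i hi
    exact le_trans (le_ciSup (f := fun i : MIN => y i / y' i)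
      (Set.finite_range _).bddAbove ⟨i, hi⟩) (le_max_left _ _)
  · intro i hi
    exact le_trans (le_ciSup (f := fun i : ↥(MINᶜ) => y' i / y i)
      (Set.finite_range _).bddAbove ⟨i, hi⟩) (le_max_right _ _)

lemma one_le_supRatio (p : ℕ) (hp : 1 ≤ p) (MIN : Set (Fin p)) (s : (Fin p → ℝ) → ℝ)
    (y' : Fin p → ℝ) (hy' : Pos p y') : ((1 : ℝ) : EReal) ≤ supRatio p MIN s y' := by
  refine le_trans ?_ (le_sSup (Set.mem_image_of_mem _ (show y' ∈ LevelSet p s y' from ⟨hy', rfl⟩)))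
  apply EReal.coe_le_coe
  have h1 := ratio_ge p MIN y' y'
  let i : Fin p := ⟨0, hp⟩
  have h2 : y' i / y' i = 1 := div_self (hy' i).ne'
  by_cases hi : i ∈ MIN
  · exact h2 ▸ h1.1 i hi
  · exact h2 ▸ h1.2 i hi

lemma approx_of_supRatio_le {X : Type*} (p : ℕ) (MIN : Set (Fin p))
    (s : (Fin p → ℝ) → ℝ) (hs : Scalarizing p MIN s) (f : X → Fin p → ℝ)
    (hpos : ∀ x, Pos p (f x)) (x x' : X) (β : ℝ) (hβ1 : 1 ≤ β)
    (hβ : supRatio p MIN s (f x') ≤ (β : EReal)) (hx : OptimalFor p s f x) :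
    Approximates p MIN β f x x' := by
  obtain ⟨z, hz, hz1, hz2⟩ := exists_level p MIN s hs (f x) (f x') (hpos x) (hpos x') (hx x')
  have hr : ratio p MIN (f x') z ≤ β :=
    EReal.coe_le_coe_iff.1 (le_trans (show _ ≤ supRatio p MIN s (f x') from le_sSup ⟨z, hz, rfl⟩) hβ)
  have hg := ratio_ge p MIN (f x') z
  constructor
  · intro i hi
    have := (hg.1 i hi).trans hr
    rw [div_le_iff₀ (hpos x' i)] at this
    exact (hz1 i hi).trans this
  · intro i hi
    have := (hg.2 i hi).trans hr
    rw [div_le_iff₀ (hz.1 i)] at this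
    refine le_trans ?_ (hz2 i hi)
    rw [one_div, inv_mul_le_iff₀ (by linarith)]
    exact this

end MOApprox

open MOApprox in
/-- Let `α := inf_{s ∈ S} sup R(s)` (suprema in the extended
reals), where `R(s)` is bounded above for at least one `s̄ ∈ S`. Then for every
`ε > 0` there is an `s ∈ S` such that every solution optimal for `s`
`(α + ε)`-approximates `x'`; and if the infimum is attained at some `s ∈ S`,
every solution optimal for that `s` `α`-approximates `x'`. -/
theorem statement10 (p : ℕ) (hp : 1 ≤ p) (MIN : Set (Fin p))
    {X : Type*} (hX : Nonempty X) (f : X → Fin p → ℝ)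
    (hpos : ∀ x, Pos p (f x)) (hcomp : IsCompact (Set.range f))
    (x' : X) (S : Set ((Fin p → ℝ) → ℝ)) (hS : ∀ s ∈ S, Scalarizing p MIN s)
    (hbdd : ∃ sbar ∈ S, BddAbove (ratio p MIN (f x') '' LevelSet p sbar (f x'))) :
    (∀ ε : ℝ, 0 < ε → ∃ s ∈ S, ∀ x : X, OptimalFor p s f x →
        Approximates p MIN
          ((⨅ s' ∈ S, supRatio p MIN s' (f x')).toReal + ε) f x x') ∧
    (∀ s ∈ S, supRatio p MIN s (f x') = (⨅ s' ∈ S, supRatio p MIN s' (f x')) →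
        ∀ x : X, OptimalFor p s f x →
          Approximates p MIN
            ((⨅ s' ∈ S, supRatio p MIN s' (f x')).toReal) f x x') := by
  set A := ⨅ s' ∈ S, supRatio p MIN s' (f x') with hA
  have h1 : ((1 : ℝ) : EReal) ≤ A :=
    le_iInf₂ fun s _ => one_le_supRatio p hp MIN s (f x') (hpos x')
  have htop : A ≠ ⊤ := by
    obtain ⟨sb, hsb, B, hB⟩ := hbdd
    have h2 : A ≤ (B : EReal) := by
      refine (iInf₂_le sb hsb).trans (sSup_le ?_)
      rintro _ ⟨y, hy, rfl⟩
      exact EReal.coe_le_coe (hB (Set.mem_image_of_mem _ hy))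
    exact ne_top_of_le_ne_top (EReal.coe_ne_top B) h2
  have hbot : A ≠ ⊥ := ne_bot_of_le_ne_bot (EReal.coe_ne_bot 1) h1
  have hcoe : ((A.toReal : ℝ) : EReal) = A := EReal.coe_toReal htop hbot
  have hα1 : 1 ≤ A.toReal := by
    rw [← hcoe] at h1
    exact EReal.coe_le_coe_iff.1 h1
  constructor
  · intro ε hε
    have hlt : A < ((A.toReal + ε : ℝ) : EReal) := by
      conv_lhs => rw [← hcoe]
      exact EReal.coe_lt_coe_iff.2 (by linarith)
    have hlt' := hlt
    conv_lhs at hlt' => rw [hA]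
    simp only [iInf_lt_iff] at hlt'
    obtain ⟨s, hs, h⟩ := hlt'
    exact ⟨s, hs, fun x hx => approx_of_supRatio_le p MIN s (hS s hs) f hpos x x' _
      (by linarith) h.le hx⟩
  · intro s hs h x hx
    exact approx_of_supRatio_le p MIN s (hS s hs) f hpos x x' _ hα1 (by rw [hcoe, h]) hx
end

section
/- Let Π = (MIN, MAX) be an objective decomposition and S a scalarization for Π. For y' ∈ ℝ^p_> and s ∈ S let R(y', s) := {max(max_{i ∈ MIN} y_i/y'_i, max_{i ∈ MAX} y'_i/y_i) : y ∈ L(y', s)}, and define, in the extended reals, α := sup_{y' ∈ ℝ^p_>} inf_{s ∈ S} sup R(y', s). If α < ∞, then for every ε > 0, in every instance of every p-objective optimization problem of type Π, every optimal solution set for S is an (α + ε)-approximation set. If, additionally, for every y' ∈ ℝ^p_> the infimum inf_{s ∈ S} sup R(y', s) is attained at some s ∈ S and is finite, then in every instance of every p-objective optimization problem of type Π, every optimal solution set for S is an α-approximation set. -/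
open scoped Classical

open MOApprox in
theorem key11 (p : ℕ) (MIN : Set (Fin p)) (s : (Fin p → ℝ) → ℝ) (hs : Scalarizing p MIN s)
    (y y' : Fin p → ℝ) (hy : Pos p y) (hy' : Pos p y') (hle : s y ≤ s y') (c : ℝ)
    (hc : supRatio p MIN s y' ≤ (c : EReal)) :
    (∀ i ∈ MIN, y i ≤ c * y' i) ∧ (∀ i ∉ MIN, (1 / c) * y' i ≤ y i) := by
  obtain ⟨hcont, hmono⟩ := hs
  let g : ℝ → Fin p → ℝ := fun t i => if i ∈ MIN then t * y i else y i / t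
  have hgpos : ∀ t, 1 ≤ t → Pos p (g t) := by
    intro t ht i
    have := hy i
    simp only [g]
    split_ifs <;> positivity
  have hg1 : g 1 = y := by
    funext i; simp [g]
  obtain ⟨T, hT1, hT⟩ : ∃ T : ℝ, 1 ≤ T ∧ ltPi p MIN y' (g T) := by
    let A : Fin p → ℝ := fun i => y i / y' i + y' i / y i
    have hA : ∀ i, 0 < A i := fun i => by
      have := hy i; have := hy' i; simp only [A]; positivity
    have hle : ∀ i, A i ≤ ∑ j, A j := fun i =>
      Finset.single_le_sum (fun j _ => (hA j).le) (Finset.mem_univ i)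
    have h0 : 0 ≤ ∑ j, A j := Finset.sum_nonneg fun j _ => (hA j).le
    refine ⟨∑ j, A j + 1, by linarith, ?_, ?_⟩
    · intro i hi
      simp only [g, hi, if_true]
      have h1 := hy i; have h2 := hy' i
      have h3 : 0 < y i / y' i := by positivity
      have h4 := hle i
      rw [← div_lt_iff₀ h1]
      simp only [A] at h4 ⊢; linarith
    · intro i hi
      simp only [g, hi, if_false]
      have h1 := hy i; have h2 := hy' i
      have h3 : 0 < y' i / y i := by positivity
      have h4 := hle i
      rw [div_lt_iff₀ (by linarith), mul_comm, ← div_lt_iff₀ h2]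
      simp only [A] at h4 ⊢; linarith
  have hgc : ContinuousOn g (Set.Icc 1 T) := by
    rw [continuousOn_pi]
    intro i
    by_cases hi : i ∈ MIN
    · simp only [g, hi, if_true]; fun_prop
    · simp only [g, hi, if_false]
      exact continuousOn_const.div continuousOn_id (fun t ht => by
        have h : (1:ℝ) ≤ t := ht.1
        exact (by linarith : (0:ℝ) < t).ne')
  have hsc : ContinuousOn (fun t => s (g t)) (Set.Icc 1 T) :=
    hcont.comp hgc (fun t ht => hgpos t ht.1)
  obtain ⟨t, ht, hts⟩ : s y' ∈ (fun t => s (g t)) '' Set.Icc 1 T := by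
    apply intermediate_value_Icc hT1 hsc
    refine ⟨?_, (hmono _ _ hy' (hgpos T hT1) hT).le⟩
    simpa only [hg1] using hle
  have ht1 : 1 ≤ t := ht.1
  have hr : ratio p MIN y' (g t) ≤ c := by
    have : ((ratio p MIN y' (g t) : ℝ) : EReal) ≤ c :=
      le_trans (le_sSup (Set.mem_image_of_mem (fun y => ((ratio p MIN y' y : ℝ) : EReal)) (show g t ∈ LevelSet p s y' from ⟨hgpos t ht1, hts⟩))) hc
    exact_mod_cast this
  constructor
  · intro i hi
    have h1 : g t i / y' i ≤ c := by
      refine le_trans (le_trans ?_ (le_max_left _ _)) hr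
      exact le_ciSup (f := fun i : MIN => g t i / y' i) (Set.finite_range _).bddAbove ⟨i, hi⟩
    rw [div_le_iff₀ (hy' i)] at h1
    simp only [g, hi, if_true] at h1
    nlinarith [hy i]
  · intro i hi
    have h1 : y' i / g t i ≤ c := by
      refine le_trans (le_trans ?_ (le_max_right _ _)) hr
      exact le_ciSup (f := fun i : ↥(MINᶜ) => y' i / g t i) (Set.finite_range _).bddAbove ⟨i, hi⟩
    have hc0 : 0 < c := lt_of_lt_of_le (div_pos (hy' i) (hgpos t ht1 i)) h1
    rw [div_le_iff₀ (hgpos t ht1 i)] at h1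
    simp only [g, hi, if_false] at h1
    have h2 : y i / t ≤ y i := div_le_self (hy i).le ht1
    rw [one_div, inv_mul_le_iff₀ hc0]
    exact h1.trans (mul_le_mul_of_nonneg_left h2 hc0.le)

open MOApprox in
/-- Let `α := sup_{y' ∈ ℝ^p_>} inf_{s ∈ S} sup R(y', s)` in the
extended reals. If `α < ∞`, then for every `ε > 0`, in every instance of every
`p`-objective problem of type `Π`, every optimal solution set for `S` is an
`(α + ε)`-approximation set. If moreover for every positive `y'` the infimum
is attained at some `s ∈ S` and is finite, then every optimal solution set for
`S` is an `α`-approximation set. -/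
theorem statement11 (p : ℕ) (hp : 1 ≤ p) (MIN : Set (Fin p))
    (S : Set ((Fin p → ℝ) → ℝ)) (hS : ∀ s ∈ S, Scalarizing p MIN s)
    (hfin : (⨆ y' ∈ {y : Fin p → ℝ | Pos p y}, ⨅ s ∈ S, supRatio p MIN s y') ≠ ⊤) :
    (∀ ε : ℝ, 0 < ε → ∀ (X : Type) (f : X → Fin p → ℝ), Nonempty X →
        (∀ x, Pos p (f x)) → IsCompact (Set.range f) →
        ∀ P : Set X, OptSolSet p S f P →
          ApproxSet p MIN
            ((⨆ y' ∈ {y : Fin p → ℝ | Pos p y}, ⨅ s ∈ S, supRatio p MIN s y').toReal + ε)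
            f P) ∧
    ((∀ y' : Fin p → ℝ, Pos p y' → ∃ s ∈ S,
        supRatio p MIN s y' = (⨅ s' ∈ S, supRatio p MIN s' y') ∧
          supRatio p MIN s y' ≠ ⊤) →
      ∀ (X : Type) (f : X → Fin p → ℝ), Nonempty X →
        (∀ x, Pos p (f x)) → IsCompact (Set.range f) →
        ∀ P : Set X, OptSolSet p S f P →
          ApproxSet p MIN
            ((⨆ y' ∈ {y : Fin p → ℝ | Pos p y}, ⨅ s ∈ S, supRatio p MIN s y').toReal)
            f P) := by
  set α := (⨆ y' ∈ {y : Fin p → ℝ | Pos p y}, ⨅ s ∈ S, supRatio p MIN s y') with hα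
  have hα1 : α ≤ (α.toReal : EReal) := EReal.le_coe_toReal hfin
  have hle : ∀ y', Pos p y' → (⨅ s ∈ S, supRatio p MIN s y') ≤ α := fun y' hy' =>
    le_iSup₂ (f := fun y' (_ : y' ∈ {y : Fin p → ℝ | Pos p y}) =>
      ⨅ s ∈ S, supRatio p MIN s y') y' hy'
  constructor
  · intro ε hε X f _ hf _ P hP x'
    have h1 : (⨅ s ∈ S, supRatio p MIN s (f x')) < ((α.toReal + ε : ℝ) : EReal) := by
      refine lt_of_le_of_lt ((hle _ (hf x')).trans hα1) ?_
      exact_mod_cast (by linarith : α.toReal < α.toReal + ε)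
    simp only [iInf_lt_iff] at h1
    obtain ⟨s, hs, h2⟩ := h1
    obtain ⟨x, hx, hopt⟩ := hP s hs
    exact ⟨x, hx, key11 p MIN s (hS s hs) _ _ (hf x) (hf x') (hopt x') _ h2.le⟩
  · intro hatt X f _ hf _ P hP x'
    obtain ⟨s, hs, h2, _⟩ := hatt (f x') (hf x')
    obtain ⟨x, hx, hopt⟩ := hP s hs
    exact ⟨x, hx, key11 p MIN s (hS s hs) _ _ (hf x) (hf x') (hopt x') _
      (h2.le.trans ((hle _ (hf x')).trans hα1))⟩
end

section
/- Let Π = (MIN, MAX) be an objective decomposition, let s be a scalarizing function for Π, and let S = {s_w : w ∈ ℝ^p_>} be the weighted scalarization induced by W = ℝ^p_> and s, where s_w(y) := s(w_1·y_1, …, w_p·y_p). For y' ∈ ℝ^p_> and any scalarizing function s' let R(y', s') := {max(max_{i ∈ MIN} y_i/y'_i, max_{i ∈ MAX} y'_i/y_i) : y ∈ L(y', s')}. Define, in the extended reals, α := sup_{y' ∈ ℝ^p_>} inf_{s' ∈ S} sup R(y', s') and β := inf_{ȳ ∈ ℝ^p_>} sup R(ȳ, s). Then α = β. -/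
open scoped Classical

open MOApprox in
theorem supRatio_scale (p : ℕ) (MIN : Set (Fin p)) (s : (Fin p → ℝ) → ℝ)
    (w y' : Fin p → ℝ) (hw : Pos p w) :
    supRatio p MIN (fun y => s (fun i => w i * y i)) y'
      = supRatio p MIN s (fun i => w i * y' i) := by
  have hr : ∀ y : Fin p → ℝ,
      ratio p MIN (fun i => w i * y' i) (fun i => w i * y i) = ratio p MIN y' y := by
    intro y
    unfold ratio
    simp only [mul_div_mul_left _ _ (hw _).ne']
  unfold supRatio
  congr 1
  ext r
  constructor
  · rintro ⟨y, ⟨hy, hsy⟩, rfl⟩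
    refine ⟨fun i => w i * y i, ⟨fun i => mul_pos (hw i) (hy i), hsy⟩, ?_⟩
    simp only [hr]
  · rintro ⟨z, ⟨hz, hsz⟩, rfl⟩
    have hzz : (fun i => w i * (z i / w i)) = z := by
      funext i
      exact mul_div_cancel₀ _ (hw i).ne'
    refine ⟨fun i => z i / w i, ⟨fun i => div_pos (hz i) (hw i), ?_⟩, ?_⟩
    · simp only [hzz]
      exact hsz
    · simp only
      rw [← hr, hzz]

open MOApprox in
/-- For the weighted scalarization `S = {s_w : w ∈ ℝ^p_>}` with
`s_w(y) = s(w_1·y_1, …, w_p·y_p)`,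
`α := sup_{y'} inf_{s' ∈ S} sup R(y', s')` equals
`β := inf_{ȳ} sup R(ȳ, s)` (both taken in the extended reals). -/
theorem statement12 (p : ℕ) (hp : 1 ≤ p) (MIN : Set (Fin p))
    (s : (Fin p → ℝ) → ℝ) (hs : Scalarizing p MIN s) :
    (⨆ y' ∈ {y : Fin p → ℝ | Pos p y},
        ⨅ s' ∈ ((fun (w : Fin p → ℝ) => fun (y : Fin p → ℝ) => s (fun i => w i * y i)) ''
          {w : Fin p → ℝ | Pos p w}),
          supRatio p MIN s' y')
      = ⨅ ybar ∈ {y : Fin p → ℝ | Pos p y}, supRatio p MIN s ybar := by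
  have key : ∀ y' ∈ {y : Fin p → ℝ | Pos p y},
      (⨅ s' ∈ ((fun (w : Fin p → ℝ) => fun (y : Fin p → ℝ) => s (fun i => w i * y i)) ''
          {w : Fin p → ℝ | Pos p w}), supRatio p MIN s' y')
      = ⨅ ybar ∈ {y : Fin p → ℝ | Pos p y}, supRatio p MIN s ybar := by
    intro y' hy'
    rw [iInf_image]
    apply le_antisymm
    · refine le_iInf₂ fun z hz => ?_
      refine (iInf₂_le (fun i => z i / y' i) fun i => div_pos (hz i) (hy' i)).trans ?_
      rw [supRatio_scale p MIN s _ y' fun i => div_pos (hz i) (hy' i)]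
      have : (fun i => z i / y' i * y' i) = z := by
        funext i
        exact div_mul_cancel₀ _ (hy' i).ne'
      rw [this]
    · refine le_iInf₂ fun w hw => ?_
      rw [supRatio_scale p MIN s w y' hw]
      exact iInf₂_le (fun i => w i * y' i) fun i => mul_pos (hw i) (hy' i)
  rw [biSup_congr key]
  exact biSup_const ⟨fun _ => 1, fun _ => one_pos⟩
end

section
/- Let Π = (MIN, MAX) be an objective decomposition, let s be a scalarizing function for Π, and let S = {s_w : w ∈ ℝ^p_>} be the weighted scalarization induced by W = ℝ^p_> and s, where s_w(y) := s(w_1·y_1, …, w_p·y_p). For ȳ ∈ ℝ^p_> let R(ȳ) := {max(max_{i ∈ MIN} y*_i/ȳ_i, max_{i ∈ MAX} ȳ_i/y*_i) : y* ∈ L(ȳ, s)}, and suppose R(ȳ₀) is bounded above for some ȳ₀ ∈ ℝ^p_>. Define β := inf_{ȳ ∈ ℝ^p_>} sup R(ȳ) (suprema in the extended reals; β is a finite real by assumption). Then for every ε > 0, in every instance of every p-objective optimization problem of type Π, every optimal solution set for S is a (β + ε)-approximation set. If moreover the infimum defining β is attained at some ȳ ∈ ℝ^p_>, then in every such instance every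 optimal solution set for S is a β-approximation set. -/
open scoped Classical

open MOApprox in
theorem core_approx (p : ℕ) (MIN : Set (Fin p))
    (s : (Fin p → ℝ) → ℝ) (hs : Scalarizing p MIN s) (α : ℝ) (yb : Fin p → ℝ) (hyb : Pos p yb)
    (hα : supRatio p MIN s yb ≤ (α : EReal)) (X : Type) (f : X → Fin p → ℝ)
    (hf : ∀ x, Pos p (f x)) (P : Set X)
    (hP : OptSolSet p
            ((fun (w : Fin p → ℝ) => fun (y : Fin p → ℝ) => s (fun i => w i * y i)) ''
              {w : Fin p → ℝ | Pos p w}) f P) : ApproxSet p MIN α f P := by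
  intro x'
  obtain ⟨x, hxP, hx⟩ := hP _ ⟨fun i => yb i / f x' i, fun i => div_pos (hyb i) (hf x' i), rfl⟩
  refine ⟨x, hxP, ?_⟩
  have h1 := hx x'
  simp only at h1
  have e1 : (fun i => yb i / f x' i * f x' i) = yb := by
    funext i; exact div_mul_cancel₀ _ (hf x' i).ne'
  rw [e1] at h1
  set y : Fin p → ℝ := fun i => yb i / f x' i * f x i with hy
  have hypos : Pos p y := fun i => mul_pos (div_pos (hyb i) (hf x' i)) (hf x i)
  let g : ℝ → Fin p → ℝ := fun t i => if i ∈ MIN then t * y i else y i / t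
  have hgpos : ∀ t : ℝ, 0 < t → Pos p (g t) := by
    intro t ht i
    by_cases hi : i ∈ MIN
    · simp only [g, hi, if_true]; exact mul_pos ht (hypos i)
    · simp only [g, hi, if_false]; exact div_pos (hypos i) ht
  have hg1 : g 1 = y := by
    funext i; simp [g]
  obtain ⟨T, hT1, hT⟩ : ∃ T : ℝ, 1 ≤ T ∧ s yb ≤ s (g T) := by
    let r : Fin p → ℝ := fun i => yb i / y i + y i / yb i
    have hr : ∀ i, 0 < yb i / y i ∧ 0 < y i / yb i := fun i =>
      ⟨div_pos (hyb i) (hypos i), div_pos (hypos i) (hyb i)⟩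
    have hsum : ∀ i, r i ≤ ∑ j, r j := fun i =>
      Finset.single_le_sum (fun j _ => (add_pos (hr j).1 (hr j).2).le) (Finset.mem_univ i)
    have hs0 : 0 ≤ ∑ j, r j := Finset.sum_nonneg (fun j _ => (add_pos (hr j).1 (hr j).2).le)
    have hTp : 0 < 1 + ∑ j, r j := by linarith
    refine ⟨1 + ∑ j, r j, by linarith, (hs.2 _ _ hyb (hgpos _ hTp) ⟨?_, ?_⟩).le⟩
    · intro i hi
      simp only [g, hi, if_true]
      rw [← div_lt_iff₀ (hypos i)]
      have := hsum i
      have := hr i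
      simp only [r] at *
      linarith
    · intro i hi
      simp only [g, hi, if_false]
      rw [div_lt_comm₀ hTp (hyb i)]
      have := hsum i
      have := hr i
      simp only [r] at *
      linarith
  have hgc : ContinuousOn (fun t => s (g t)) (Set.Icc 1 T) := by
    refine hs.1.comp (t := {y | Pos p y}) ?_ ?_
    · refine continuousOn_pi.2 fun i => ?_
      by_cases hi : i ∈ MIN
      · simp only [g, hi, if_true]; fun_prop
      · simp only [g, hi, if_false]
        refine continuousOn_const.div continuousOn_id ?_
        intro t ht
        have : (0 : ℝ) < t := lt_of_lt_of_le one_pos ht.1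
        exact this.ne'
    · intro t ht
      exact hgpos t (lt_of_lt_of_le one_pos ht.1)
  obtain ⟨t, ht, hst⟩ := intermediate_value_Icc hT1 hgc ⟨by simpa only [hg1] using h1, hT⟩
  simp only at hst
  have ht0 : 0 < t := lt_of_lt_of_le one_pos ht.1
  have hrat : ratio p MIN yb (g t) ≤ α := by
    have : ((ratio p MIN yb (g t) : ℝ) : EReal) ≤ α :=
      le_trans (b := supRatio p MIN s yb) (le_sSup ⟨g t, ⟨hgpos t ht0, hst⟩, rfl⟩) hα
    exact_mod_cast this
  obtain ⟨hr1, hr2⟩ := max_le_iff.1 hrat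
  constructor
  · intro i hi
    have h := (le_ciSup (Set.finite_range (fun i : MIN => g t i / yb i)).bddAbove ⟨i, hi⟩).trans hr1
    simp only [g, hi, if_true] at h
    rw [div_le_iff₀ (hyb i)] at h
    have h2 : y i ≤ α * yb i := by nlinarith [hypos i, ht.1]
    simp only [hy] at h2
    rw [div_mul_eq_mul_div, div_le_iff₀ (hf x' i)] at h2
    have := hyb i
    exact le_of_mul_le_mul_left (by linarith) this
  · intro i hi
    have h := (le_ciSup (Set.finite_range (fun i : ↥(MINᶜ) => yb i / g t i)).bddAbove
      ⟨i, hi⟩).trans hr2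
    have hα0 : 0 < α := lt_of_lt_of_le (div_pos (hyb i) (hgpos t ht0 i)) h
    rw [div_le_iff₀ (hgpos t ht0 i)] at h
    simp only [g, hi, if_false] at h
    have h3 : y i / t ≤ y i := div_le_self (hypos i).le ht.1
    have h2 : yb i ≤ α * y i := h.trans (mul_le_mul_of_nonneg_left h3 hα0.le)
    simp only [hy] at h2
    rw [div_mul_eq_mul_div, ← mul_div_assoc, le_div_iff₀ (hf x' i)] at h2
    rw [div_mul_eq_mul_div, one_mul, div_le_iff₀ hα0]
    have := hyb i
    exact le_of_mul_le_mul_left (by linarith) this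

open MOApprox in
/-- For the weighted scalarization `S = {s_w : w ∈ ℝ^p_>}` indu-
ced by `s`, with `β := inf_{ȳ ∈ ℝ^p_>} sup R(ȳ)` (suprema in the extended
reals, finite since some `R(ȳ₀)` is bounded above): for every `ε > 0`, in every
instance of every `p`-objective problem of type `Π`, every optimal solution set
for `S` is a `(β + ε)`-approximation set; and if the infimum defining `β` is
attained, every optimal solution set for `S` is a `β`-approximation set. -/
theorem statement13 (p : ℕ) (hp : 1 ≤ p) (MIN : Set (Fin p))
    (s : (Fin p → ℝ) → ℝ) (hs : Scalarizing p MIN s)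
    (hbdd : ∃ ybar0 : Fin p → ℝ, Pos p ybar0 ∧
      BddAbove (ratio p MIN ybar0 '' LevelSet p s ybar0)) :
    (∀ ε : ℝ, 0 < ε → ∀ (X : Type) (f : X → Fin p → ℝ), Nonempty X →
        (∀ x, Pos p (f x)) → IsCompact (Set.range f) →
        ∀ P : Set X,
          OptSolSet p
            ((fun (w : Fin p → ℝ) => fun (y : Fin p → ℝ) => s (fun i => w i * y i)) ''
              {w : Fin p → ℝ | Pos p w}) f P →
          ApproxSet p MIN
            ((⨅ ybar ∈ {y : Fin p → ℝ | Pos p y}, supRatio p MIN s ybar).toReal + ε)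
            f P) ∧
    ((∃ ybar ∈ {y : Fin p → ℝ | Pos p y},
        supRatio p MIN s ybar
          = (⨅ y'' ∈ {y : Fin p → ℝ | Pos p y}, supRatio p MIN s y'')) →
      ∀ (X : Type) (f : X → Fin p → ℝ), Nonempty X →
        (∀ x, Pos p (f x)) → IsCompact (Set.range f) →
        ∀ P : Set X,
          OptSolSet p
            ((fun (w : Fin p → ℝ) => fun (y : Fin p → ℝ) => s (fun i => w i * y i)) ''
              {w : Fin p → ℝ | Pos p w}) f P →
          ApproxSet p MIN
            ((⨅ ybar ∈ {y : Fin p → ℝ | Pos p y}, supRatio p MIN s ybar).toReal)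
            f P) := by
  obtain ⟨y0, hy0, b, hb⟩ := hbdd
  set B : EReal := ⨅ ybar ∈ {y : Fin p → ℝ | Pos p y}, supRatio p MIN s ybar with hB
  have hBtop : B ≠ ⊤ := by
    have h1 : B ≤ supRatio p MIN s y0 := iInf₂_le y0 hy0
    have h2 : supRatio p MIN s y0 ≤ (b : EReal) := by
      refine sSup_le ?_
      rintro _ ⟨y, hy, rfl⟩
      exact EReal.coe_le_coe_iff.2 (hb ⟨y, hy, rfl⟩)
    exact ((h1.trans h2).trans_lt (EReal.coe_lt_top b)).ne
  have hBbot : B ≠ ⊥ := by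
    have h0 : (0 : EReal) ≤ B := by
      refine le_iInf₂ fun y hy => ?_
      refine le_trans ?_ (le_sSup ⟨y, ⟨hy, rfl⟩, rfl⟩)
      have : 0 ≤ ratio p MIN y y :=
        le_max_of_le_left (Real.iSup_nonneg fun i => (div_pos (hy i) (hy i)).le)
      exact EReal.coe_nonneg.2 this
    exact (lt_of_lt_of_le EReal.bot_lt_zero h0).ne'
  have hBr : ((B.toReal : ℝ) : EReal) = B := EReal.coe_toReal hBtop hBbot
  constructor
  · intro ε hε X f _ hf _ P hP
    have hlt : B < ((B.toReal + ε : ℝ) : EReal) := by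
      conv_lhs => rw [← hBr]
      exact EReal.coe_lt_coe_iff.2 (by linarith)
    obtain ⟨yb, hyb⟩ := iInf_lt_iff.1 (hB ▸ hlt)
    obtain ⟨hyp, hlt'⟩ := iInf_lt_iff.1 hyb
    exact core_approx p MIN s hs _ yb hyp hlt'.le X f hf P hP
  · rintro ⟨yb, hyp, he⟩ X f _ hf _ P hP
    exact core_approx p MIN s hs _ yb hyp (by rw [hBr]; exact he.le) X f hf P hP
end

section
/- Let s : ℝ^p → ℝ be a norm that is strictly monotone on the positive orthant, and for ȳ ∈ ℝ^p_> let L(ȳ, s) := {y ∈ ℝ^p_> : s(y) = s(ȳ)}. Then inf_{ȳ ∈ ℝ^p_>} sup{ max_{i=1,…,p} y*_i/ȳ_i : y* ∈ L(ȳ, s) } = s(1/s(e^1), …, 1/s(e^p)), and the infimum is attained at ȳ = (1/s(e^1), …, 1/s(e^p)). -/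
open scoped Classical

namespace MOApprox

theorem aux_mono (p : ℕ) (s : (Fin p → ℝ) → ℝ)
    (hnorm : IsNorm p s) (hmono : StrictMonoOnPos p s) (y y' : Fin p → ℝ)
    (h0 : ∀ i, 0 ≤ y i) (h : ∀ i, y i ≤ y' i) : s y ≤ s y' := by
  obtain ⟨hn, hz, hs, ht⟩ := hnorm
  set o : Fin p → ℝ := fun _ => 1 with ho
  have key : ∀ ε : ℝ, 0 < ε → s y ≤ s y' + ε * (3 * s o) := by
    intro ε hε
    have h1 : s y ≤ s (y + ε • o) + s ((-ε) • o) := by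
      have := ht (y + ε • o) ((-ε) • o)
      have e : y + ε • o + (-ε) • o = y := by ext i; simp
      rwa [e] at this
    have h2 : s (y + ε • o) < s (y' + (2 * ε) • o) := by
      apply hmono
      · intro i; have := h0 i; simp [ho]; linarith
      · intro i; have := h0 i; have := h i; simp [ho]; linarith
      · intro i; have := h i; simp [ho]; linarith
    have h3 := ht y' ((2 * ε) • o)
    rw [hs, abs_of_pos (by linarith)] at h3
    rw [hs, abs_neg, abs_of_pos hε] at h1
    linarith
  apply le_of_forall_pos_le_add
  intro δ hδ
  have hp : 0 < 3 * s o + 1 := by have := hn o; linarith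
  refine (key (δ / (3 * s o + 1)) (by positivity)).trans ?_
  have : δ / (3 * s o + 1) * (3 * s o) ≤ δ := by
    rw [div_mul_eq_mul_div, div_le_iff₀ hp]; nlinarith
  linarith

theorem aux_e (p : ℕ) (s : (Fin p → ℝ) → ℝ) (hnorm : IsNorm p s) (i : Fin p) :
    0 < s (Pi.single i 1) := by
  refine lt_of_le_of_ne (hnorm.1 _) fun h => ?_
  have := (hnorm.2.1 _).1 h.symm
  have := congrFun this i
  simp at this

theorem aux_ub (p : ℕ) (s : (Fin p → ℝ) → ℝ)
    (hnorm : IsNorm p s) (hmono : StrictMonoOnPos p s) (y : Fin p → ℝ) (hy : Pos p y)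
    (i : Fin p) : y i * s (Pi.single i 1) ≤ s y := by
  have h := aux_mono p s hnorm hmono (y i • Pi.single i 1) y
    (fun j => by
      by_cases hj : j = i
      · subst hj; simpa using (hy j).le
      · simp [hj])
    (fun j => by
      by_cases hj : j = i
      · subst hj; simp
      · simpa [hj] using (hy j).le)
  rwa [hnorm.2.2.1, abs_of_pos (hy i)] at h

theorem aux_bdd (p : ℕ) (hp : 1 ≤ p) (s : (Fin p → ℝ) → ℝ)
    (hnorm : IsNorm p s) (hmono : StrictMonoOnPos p s) (ybar : Fin p → ℝ) (hy : Pos p ybar) :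
    BddAbove ((fun y => ⨆ i : Fin p, y i / ybar i) '' LevelSet p s ybar) := by
  haveI : Nonempty (Fin p) := ⟨⟨0, hp⟩⟩
  refine ⟨∑ i, s ybar / (s (Pi.single i 1) * ybar i), ?_⟩
  rintro _ ⟨y, ⟨hyp, hys⟩, rfl⟩
  refine ciSup_le fun i => ?_
  have he := fun i => aux_e p s hnorm i
  have hu := aux_ub p s hnorm hmono y hyp i
  refine le_trans ?_ (Finset.single_le_sum (f := fun i => s ybar / (s (Pi.single i 1) * ybar i))
    (fun j _ => div_nonneg (hnorm.1 _) (mul_pos (he j) (hy j)).le) (Finset.mem_univ i))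
  have := he i
  have := hy i
  rw [div_le_div_iff₀ (hy i) (mul_pos (he i) (hy i)), ← hys]
  nlinarith

theorem aux_lb (p : ℕ) (hp : 1 ≤ p) (s : (Fin p → ℝ) → ℝ)
    (hnorm : IsNorm p s) (hmono : StrictMonoOnPos p s) (ybar : Fin p → ℝ) (hy : Pos p ybar) :
    s (fun i => 1 / s (Pi.single i 1)) ≤
          sSup ((fun y => ⨆ i : Fin p, y i / ybar i) '' LevelSet p s ybar) := by
  haveI : Nonempty (Fin p) := ⟨⟨0, hp⟩⟩
  have hb := aux_bdd p hp s hnorm hmono ybar hy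
  have hmon := aux_mono p s hnorm hmono
  have he := fun i => aux_e p s hnorm i
  have hpos : ∀ y, Pos p y → 0 < s y := fun y h =>
    lt_of_lt_of_le (mul_pos (h ⟨0, hp⟩) (he _)) (aux_ub p s hnorm hmono y h ⟨0, hp⟩)
  obtain ⟨hn, hz, hs, ht⟩ := hnorm
  set M := sSup ((fun y => ⨆ i : Fin p, y i / ybar i) '' LevelSet p s ybar) with hM
  have hle : ∀ y, Pos p y → s y = s ybar → ∀ i, y i / ybar i ≤ M := by
    intro y h1 h2 i
    exact (le_ciSup (f := fun i => y i / ybar i) (Set.finite_range _).bddAbove i).trans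
      (le_csSup hb ⟨y, ⟨h1, h2⟩, rfl⟩)
  have hM0 : 0 ≤ M := by
    have := hle ybar hy rfl ⟨0, hp⟩
    rw [div_self (hy _).ne'] at this
    linarith
  set o : Fin p → ℝ := fun _ => 1 with ho
  have key : ∀ i, s ybar ≤ M * ybar i * s (Pi.single i 1) := by
    intro i
    have k : ∀ ε : ℝ, 0 < ε → s ybar ≤ M * ybar i * (s (Pi.single i 1) + ε * s o) := by
      intro ε hε
      set z : Fin p → ℝ := Pi.single i 1 + ε • o with hzd
      have hzp : Pos p z := by
        intro j
        by_cases hj : j = i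
        · subst hj; simp [hzd, ho]; linarith
        · simpa [hzd, ho, hj] using hε
      have hsz := hpos z hzp
      have hc : 0 < s ybar / s z := div_pos (hpos _ hy) hsz
      have h1 := hle ((s ybar / s z) • z) (fun j => by
        simpa using mul_pos hc (hzp j)) (by
        rw [hs, abs_of_pos hc]; field_simp) i
      have h2 : s z ≤ s (Pi.single i 1) + ε * s o := by
        have := ht (Pi.single i 1) (ε • o)
        rwa [hs, abs_of_pos hε] at this
      have h3 : 1 ≤ z i := by simp [hzd, ho]; exact hε.le
      rw [div_le_iff₀ (hy i)] at h1
      have h4 : s ybar / s z ≤ M * ybar i := by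
        refine le_trans ?_ h1
        simp only [Pi.smul_apply, smul_eq_mul]
        exact le_mul_of_one_le_right hc.le h3
      rw [div_le_iff₀ hsz] at h4
      exact h4.trans (mul_le_mul_of_nonneg_left h2 (mul_nonneg hM0 (hy i).le))
    apply le_of_forall_pos_le_add
    intro δ hδ
    have hA : 0 ≤ M * ybar i * s o := mul_nonneg (mul_nonneg hM0 (hy i).le) (hn _)
    have hA1 : 0 < M * ybar i * s o + 1 := by linarith
    refine (k (δ / (M * ybar i * s o + 1)) (by positivity)).trans ?_
    have : δ / (M * ybar i * s o + 1) * (M * ybar i * s o) ≤ δ := by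
      rw [div_mul_eq_mul_div, div_le_iff₀ hA1]; nlinarith
    linarith
  have hsy := hpos _ hy
  have fin := hmon (s ybar • fun i => 1 / s (Pi.single i 1)) (M • ybar)
    (fun i => by have := he i; simp; positivity)
    (fun i => by
      have := key i
      simp only [Pi.smul_apply, smul_eq_mul, mul_one_div]
      rwa [div_le_iff₀ (he i)])
  rw [hs, hs, abs_of_pos hsy, abs_of_nonneg hM0, mul_comm] at fin
  exact le_of_mul_le_mul_right fin hsy

end MOApprox

open MOApprox in
/-- For a strictly monotone norm `s`,
`inf_{ȳ ∈ ℝ^p_>} sup{max_i y*_i/ȳ_i : y* ∈ L(ȳ, s)} = s(1/s(e^1), …, 1/s(e^p))`,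
and the infimum is attained at `ȳ = (1/s(e^1), …, 1/s(e^p))`. -/
theorem statement14 (p : ℕ) (hp : 1 ≤ p) (s : (Fin p → ℝ) → ℝ)
    (hnorm : IsNorm p s) (hmono : StrictMonoOnPos p s) :
    (∀ ybar : Fin p → ℝ, Pos p ybar →
        s (fun i => 1 / s (Pi.single i 1)) ≤
          sSup ((fun y => ⨆ i : Fin p, y i / ybar i) '' LevelSet p s ybar)) ∧
    sSup ((fun y => ⨆ i : Fin p, y i / (1 / s (Pi.single i 1))) ''
          LevelSet p s (fun j => 1 / s (Pi.single j 1)))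
      = s (fun i => 1 / s (Pi.single i 1)) := by
  haveI : Nonempty (Fin p) := ⟨⟨0, hp⟩⟩
  have hu : Pos p (fun i => 1 / s (Pi.single i 1)) :=
    fun i => one_div_pos.2 (aux_e p s hnorm i)
  refine ⟨fun y hy => aux_lb p hp s hnorm hmono y hy, le_antisymm ?_ ?_⟩
  · refine csSup_le ⟨_, _, ⟨hu, rfl⟩, rfl⟩ ?_
    rintro _ ⟨y, ⟨hy, hys⟩, rfl⟩
    refine ciSup_le fun i => ?_
    rw [← hys, div_div_eq_mul_div, div_one]
    exact aux_ub p s hnorm hmono y hy i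
  · exact aux_lb p hp s hnorm hmono _ hu
end

section
/- Let s : ℝ^p → ℝ be a norm that is strictly monotone on the positive orthant, let Π^min := ({1,…,p}, ∅), and let S = {s_w : w ∈ ℝ^p_>} be the weighted scalarization induced by W = ℝ^p_> and the restriction of s to ℝ^p_>, where s_w(y) := s(w_1·y_1, …, w_p·y_p). Let α := s(1/s(e^1), …, 1/s(e^p)). Then in every instance of every p-objective minimization problem (i.e., every instance of type Π^min), every optimal solution set for S is an α-approximation set. -/
open scoped Classical

open MOApprox in
lemma key15 (p : ℕ) (s : (Fin p → ℝ) → ℝ)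
    (hnorm : IsNorm p s) (hmono : StrictMonoOnPos p s) (z : Fin p → ℝ) (hz : Pos p z)
    (i : Fin p) : z i * s (Pi.single i 1) ≤ s z := by
  obtain ⟨h0, h1, h2, h3⟩ := hnorm
  have main : ∀ ε : ℝ, 0 < ε → z i * s (Pi.single i 1) ≤ s z + 3 * ε * s z := by
    intro ε hε
    have ha : s (z i • (Pi.single i 1 : Fin p → ℝ) + ε • z) < s ((1 + 2 * ε) • z) := by
      apply hmono
      · intro j
        have hj := mul_pos hε (hz j)
        have hi := hz i
        by_cases hji : j = i
        · subst hji
          simp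
          linarith
        · simpa [hji] using hj
      · intro j
        have := hz j
        simp only [Pi.smul_apply, smul_eq_mul]
        positivity
      · intro j
        have hj := mul_pos hε (hz j)
        have hj' := hz j
        by_cases hji : j = i
        · subst hji
          simp
          linarith
        · simp [hji]
          linarith
    have hb := h3 (z i • (Pi.single i 1 : Fin p → ℝ) + ε • z) ((-ε) • z)
    have hc : (z i • (Pi.single i 1 : Fin p → ℝ) + ε • z) + ((-ε) • z)
        = z i • (Pi.single i 1 : Fin p → ℝ) := by
      rw [neg_smul]; abel
    rw [hc, h2, h2, abs_of_pos (hz i), abs_neg, abs_of_pos hε] at hb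
    rw [h2, abs_of_pos (by linarith : 0 < 1 + 2 * ε)] at ha
    linarith
  apply le_of_forall_pos_le_add
  intro δ hδ
  have hs := h0 z
  refine (main (δ / (3 * (s z + 1))) (by positivity)).trans ?_
  have : 3 * (δ / (3 * (s z + 1))) * s z = δ * (s z / (s z + 1)) := by
    field_simp
  rw [this]
  have h4 : s z / (s z + 1) ≤ 1 := by
    rw [div_le_one (by positivity)]; linarith
  nlinarith

open MOApprox in
/-- For a strictly monotone norm `s`, the weighted scalarization
`S = {s_w : w ∈ ℝ^p_>}` and `α := s(1/s(e^1), …, 1/s(e^p))`: in every instance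
of every `p`-objective minimization problem, every optimal solution set for `S`
is an `α`-approximation set. -/
theorem statement15 (p : ℕ) (hp : 1 ≤ p) (s : (Fin p → ℝ) → ℝ)
    (hnorm : IsNorm p s) (hmono : StrictMonoOnPos p s) :
    ∀ (X : Type) (f : X → Fin p → ℝ), Nonempty X → (∀ x, Pos p (f x)) →
      IsCompact (Set.range f) →
      ∀ P : Set X,
        OptSolSet p
          ((fun (w : Fin p → ℝ) => fun (y : Fin p → ℝ) => s (fun i => w i * y i)) ''
            {w : Fin p → ℝ | Pos p w}) f P →
        ApproxSet p Set.univ (s (fun i => 1 / s (Pi.single i 1))) f P := by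
  intro X f _ hf _ P hP x'
  have hs : ∀ i : Fin p, 0 < s (Pi.single i 1) := by
    intro i
    refine lt_of_le_of_ne (hnorm.1 _) (fun h => ?_)
    have := (hnorm.2.1 _).1 h.symm
    simp at this
  have hw : Pos p (fun i => 1 / (s (Pi.single i 1) * f x' i)) := fun i => by
    have := hs i
    have := hf x' i
    positivity
  obtain ⟨x, hx, hopt⟩ := hP _ ⟨_, hw, rfl⟩
  refine ⟨x, hx, fun i _ => ?_, fun i hi => absurd (Set.mem_univ i) hi⟩
  have h := hopt x'
  have he : (fun i => 1 / (s (Pi.single i 1) * f x' i) * f x' i)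
      = fun i => 1 / s (Pi.single i 1) := by
    funext j
    have := (hs j).ne'
    have := (hf x' j).ne'
    field_simp
  simp only [he] at h
  have hk := (key15 p s hnorm hmono (fun i => 1 / (s (Pi.single i 1) * f x' i) * f x i)
    (fun j => mul_pos (hw j) (hf x j)) i).trans h
  have hq : 1 / (s (Pi.single i 1) * f x' i) * f x i * s (Pi.single i 1) = f x i / f x' i := by
    have := (hs i).ne'
    have := (hf x' i).ne'
    field_simp
  simp only [hq] at hk
  exact (div_le_iff₀ (hf x' i)).1 hk
end

section
/- Let s : ℝ^p → ℝ be a norm that is strictly monotone on the positive orthant, and let S = {s_w : w ∈ ℝ^p_>} be the weighted scalarization induced by W = ℝ^p_> and the restriction of s to ℝ^p_>, where s_w(y) := s(w_1·y_1, …, w_p·y_p). Let α := s(1/s(e^1), …, 1/s(e^p)). Then for every ε with 0 < ε < 1 there exists an instance I = (X, f) of a p-objective minimization problem (with X finite and nonempty and f(X) ⊆ ℝ^p_>) such that the set of S-supported solutions is not an (α·(1 − ε))-approximation set. -/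
open scoped Classical

open MOApprox in
/-- For a strictly monotone norm `s`, the weighted scalarization
`S = {s_w : w ∈ ℝ^p_>}` and `α := s(1/s(e^1), …, 1/s(e^p))`: for every
`0 < ε < 1` there is an instance of a `p`-objective minimization problem (with
finite nonempty feasible set and positive images) in which the set of
`S`-supported solutions is not an `(α·(1 − ε))`-approximation set. -/
theorem statement16 (p : ℕ) (hp : 1 ≤ p) (s : (Fin p → ℝ) → ℝ)
    (hnorm : IsNorm p s) (hmono : StrictMonoOnPos p s)
    (ε : ℝ) (hε0 : 0 < ε) (hε1 : ε < 1) :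
    ∃ (n : ℕ) (f : Fin (n + 1) → Fin p → ℝ), (∀ x, Pos p (f x)) ∧
      ¬ ApproxSet p Set.univ (s (fun i => 1 / s (Pi.single i 1)) * (1 - ε)) f
        {x | ∃ w : Fin p → ℝ, Pos p w ∧
          OptimalFor p (fun y => s (fun i => w i * y i)) f x} := by
  obtain ⟨hn, h0, hs, ht⟩ := hnorm
  have ha : ∀ i, 0 < s (Pi.single i 1) := by
    intro i
    refine lt_of_le_of_ne (hn _) (fun h => ?_)
    have h2 := (h0 _).1 h.symm
    have h3 := congrFun h2 i
    simp at h3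
  set a : Fin p → ℝ := fun i => s (Pi.single i 1) with hadef
  have haa : ∀ i, 0 < a i := ha
  set α : ℝ := s (fun i => 1 / s (Pi.single i 1)) with hα
  have hα0 : 0 ≤ α := hn _
  have hM0 : 0 ≤ α * (1 - ε) := mul_nonneg hα0 (by linarith)
  have hsingle : ∀ i j : Fin p, 0 ≤ (Pi.single i 1 : Fin p → ℝ) j := by
    intro i j
    by_cases h : j = i
    · subst h; simp
    · simp [h]
  refine ⟨p, Fin.cons (fun _ => 1)
    (fun i j => α * (1 - ε) * (Pi.single i 1 : Fin p → ℝ) j + ε / 2), ?_, ?_⟩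
  · intro x
    refine Fin.cases ?_ (fun i => ?_) x
    · intro j
      simp
    · intro j
      have := mul_nonneg hM0 (hsingle i j)
      simp only [Fin.cons_succ]
      linarith
  · intro hA
    obtain ⟨x, ⟨w, hw, hopt⟩, hx, -⟩ := hA 0
    revert hopt hx
    refine Fin.cases ?_ (fun i => ?_) x
    · intro hopt _
      haveI : Nonempty (Fin p) := ⟨⟨0, hp⟩⟩
      obtain ⟨i, hi⟩ := Finite.exists_min (fun i => w i * a i)
      have h1 := hopt i.succ
      simp only [Fin.cons_succ, Fin.cons_zero, mul_one] at h1
      have hc : 0 < w i * a i := mul_pos (hw i) (haa i)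
      have e1 : (fun j => w j * (α * (1 - ε) * (Pi.single i 1 : Fin p → ℝ) j + ε / 2))
          = (α * (1 - ε) * w i) • (Pi.single i 1 : Fin p → ℝ) + (ε / 2) • w := by
        funext j
        by_cases h : j = i
        · subst h; simp; ring
        · simp [h]; ring
      have h2 := ht ((α * (1 - ε) * w i) • (Pi.single i 1 : Fin p → ℝ)) ((ε / 2) • w)
      rw [e1] at h1
      rw [hs, hs, abs_of_nonneg (mul_nonneg hM0 (hw i).le),
        abs_of_pos (by linarith : 0 < ε / 2)] at h2
      have h3 := hmono (((1 - ε) * (w i * a i)) • (fun j => 1 / s (Pi.single j 1)))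
        ((1 - ε / 2) • w) ?_ ?_ ?_
      · rw [hs, hs, abs_of_pos (mul_pos (by linarith) hc),
          abs_of_pos (by linarith : 0 < 1 - ε / 2)] at h3
        have h4 : s (Pi.single i 1) = a i := rfl
        rw [h4] at h2
        change _ * α < _ at h3
        change s w ≤ _ at h1
        nlinarith
      · intro j
        have := ha j
        have : 0 < 1 - ε := by linarith
        simp only [Pi.smul_apply, smul_eq_mul]
        positivity
      · intro j
        exact mul_pos (by linarith) (hw j)
      · intro j
        simp only [Pi.smul_apply, smul_eq_mul]
        have h5 : w i * a i ≤ w j * a j := hi j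
        change _ * (1 / a j) < _
        rw [mul_one_div, div_lt_iff₀ (haa j)]
        have h6 := mul_pos hε0 (mul_pos (hw j) (haa j))
        have h7 := mul_le_mul_of_nonneg_left h5 (by linarith : 0 ≤ 1 - ε)
        nlinarith
    · intro _ hx
      have := hx i (Set.mem_univ _)
      simp at this
      linarith
end

section
/- Let s : ℝ^p → ℝ be a norm that is strictly monotone on the positive orthant, and let ȳ ∈ ℝ^p_>. Then sup{ max_{i=1,…,p} y*_i/ȳ_i : y* ∈ L(ȳ, s) } = max_{i=1,…,p} s(ȳ)/(s(e^i)·ȳ_i), where the supremum is taken in ℝ (the set on the left is nonempty, since ȳ ∈ L(ȳ, s), and bounded above). -/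
open scoped Classical

theorem aux_le (A B C : ℝ) (hC : 0 ≤ C) (h : ∀ d > 0, A ≤ B + d * C) : A ≤ B := by
  by_contra hlt
  push Not at hlt
  have h1 := h ((A - B) / (2 * (C + 1))) (by apply div_pos <;> linarith)
  have h2 : (A - B) / (2 * (C + 1)) * C ≤ (A - B) / 2 := by
    rw [div_mul_eq_mul_div, div_le_div_iff₀ (by linarith) (by norm_num)]
    nlinarith
  linarith

open MOApprox in
/-- For a strictly monotone norm `s` and `ȳ ∈ ℝ^p_>`,
`sup{max_i y*_i/ȳ_i : y* ∈ L(ȳ, s)} = max_i s(ȳ)/(s(e^i)·ȳ_i)`. -/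
theorem statement19 (p : ℕ) (hp : 1 ≤ p) (s : (Fin p → ℝ) → ℝ)
    (hnorm : IsNorm p s) (hmono : StrictMonoOnPos p s)
    (ybar : Fin p → ℝ) (hybar : Pos p ybar) :
    sSup ((fun y => ⨆ i : Fin p, y i / ybar i) '' LevelSet p s ybar)
      = ⨆ i : Fin p, s ybar / (s (Pi.single i 1) * ybar i) := by
  obtain ⟨h0, hz, hs, ht⟩ := hnorm
  haveI : Nonempty (Fin p) := ⟨⟨0, hp⟩⟩
  have hpos : ∀ y, Pos p y → 0 < s y := by
    intro y hy
    refine lt_of_le_of_ne (h0 y) (fun h => ?_)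
    have h1 := (hz y).1 h.symm
    have h2 := hy ⟨0, hp⟩
    rw [h1] at h2
    exact lt_irrefl _ h2
  have he : ∀ i : Fin p, 0 < s (Pi.single i 1) := by
    intro i
    refine lt_of_le_of_ne (h0 _) (fun h => ?_)
    have h1 := congrFun ((hz _).1 h.symm) i
    simp at h1
  have hb := hpos _ hybar
  have one0 := h0 (fun _ => 1)
  have hnn : ∀ i j : Fin p, (0 : ℝ) ≤ (Pi.single i 1 : Fin p → ℝ) j := by
    intro i j
    by_cases hij : j = i
    · subst hij; simp
    · simp [Pi.single_eq_of_ne hij]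
  have key : ∀ y, Pos p y → ∀ i, y i * s (Pi.single i 1) ≤ s y := by
    intro y hy i
    refine aux_le _ _ (3 * s (fun _ => 1)) (by linarith) (fun d hd => ?_)
    have e1 : s ((y i) • (Pi.single i 1 : Fin p → ℝ)) = y i * s (Pi.single i 1) := by
      rw [hs, abs_of_pos (hy i)]
    have e2 := ht ((y i) • (Pi.single i 1 : Fin p → ℝ) + d • (fun _ => 1)) ((-d) • (fun _ => 1))
    have e3 := ht y ((2 * d) • (fun _ => 1))
    have e4 : (y i) • (Pi.single i 1 : Fin p → ℝ) + d • (fun _ => (1 : ℝ)) + (-d) • (fun _ => 1)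
        = (y i) • (Pi.single i 1 : Fin p → ℝ) := by
      ext j; simp
    have e5 := hmono ((y i) • (Pi.single i 1 : Fin p → ℝ) + d • (fun _ => 1))
      (y + (2 * d) • (fun _ => 1)) (fun j => by
        have := mul_nonneg (hy i).le (hnn i j)
        simp only [Pi.add_apply, Pi.smul_apply, smul_eq_mul]
        linarith) (fun j => by
        have := hy j
        simp only [Pi.add_apply, Pi.smul_apply, smul_eq_mul]
        linarith) (fun j => by
        have h3 := hy j
        simp only [Pi.add_apply, Pi.smul_apply, smul_eq_mul]
        by_cases hij : j = i
        · subst hij; simp; linarith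
        · simp [Pi.single_eq_of_ne hij]; linarith)
    rw [e4, e1, hs, abs_neg, abs_of_pos hd] at e2
    rw [hs, abs_of_pos (by linarith)] at e3
    linarith
  have bddR : ∀ f : Fin p → ℝ, BddAbove (Set.range f) := fun f => (Set.finite_range f).bddAbove
  have ub : ∀ r ∈ ((fun y => ⨆ i : Fin p, y i / ybar i) '' LevelSet p s ybar),
      r ≤ ⨆ i : Fin p, s ybar / (s (Pi.single i 1) * ybar i) := by
    rintro r ⟨y, ⟨hy, hsy⟩, rfl⟩
    refine ciSup_le (fun i => ?_)
    refine le_trans ?_ (le_ciSup (bddR _) i)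
    have := key y hy i
    rw [hsy] at this
    rw [div_le_div_iff₀ (hybar i) (mul_pos (he i) (hybar i))]
    nlinarith [hybar i]
  apply le_antisymm
  · exact csSup_le ⟨_, ybar, ⟨hybar, rfl⟩, rfl⟩ ub
  · refine ciSup_le (fun i => ?_)
    set S := sSup ((fun y => ⨆ i : Fin p, y i / ybar i) '' LevelSet p s ybar) with hS
    have hle : ∀ y ∈ LevelSet p s ybar, y i / ybar i ≤ S := fun y hy =>
      le_trans (le_ciSup (bddR (fun i => y i / ybar i)) i) (le_csSup ⟨_, ub⟩ ⟨y, hy, rfl⟩)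
    have S0 : 0 < S := lt_of_lt_of_le (div_pos (hybar i) (hybar i)) (hle ybar ⟨hybar, rfl⟩)
    rw [div_le_iff₀ (mul_pos (he i) (hybar i))]
    have hSb := mul_pos S0 (hybar i)
    refine aux_le _ _ (S * ybar i * s (fun _ => 1)) (mul_nonneg hSb.le one0) (fun d hd => ?_)
    set z : Fin p → ℝ := Pi.single i 1 + d • (fun _ => 1) with hzd
    have zp : Pos p z := fun j => by
      have := hnn i j
      simp only [hzd, Pi.add_apply, Pi.smul_apply, smul_eq_mul]
      linarith
    have zs := hpos z zp
    have zi : z i = 1 + d := by simp [hzd]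
    have zle : s z ≤ s (Pi.single i 1) + d * s (fun _ => 1) := by
      have := ht (Pi.single i 1) (d • (fun _ => 1))
      rwa [hs, abs_of_pos hd] at this
    have c0 : 0 < s ybar / s z := div_pos hb zs
    have h1 := hle ((s ybar / s z) • z) ⟨fun j => by
      simpa using mul_pos c0 (zp j), by
      rw [hs, abs_of_pos c0, div_mul_cancel₀ _ zs.ne']⟩
    rw [Pi.smul_apply, smul_eq_mul, zi, div_le_iff₀ (hybar i), div_mul_eq_mul_div,
      div_le_iff₀ zs] at h1
    have h2 := mul_le_mul_of_nonneg_left zle hSb.le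
    have h3 := mul_pos hb hd
    linarith
end
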